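/- Fix reals d and k with 2 ≤ k ≤ (1 − 1/√2)·d, and set C_{k,d} = e^{−4} (2k/d)^{1 + 1/(k−1)}. Then the function α ↦ (d/2)·[ h((2k/d)·α) + 2 h(α − (2k/d)·α) + h(1 − 2α + (2k/d)·α) ] − (d − 1)·[ h(α) + h(1 − α) ] is decreasing on the interval 0 ≤ α ≤ C_{k,d}. -/

import Mathlib

/-!
Monotonicity of the entropy functional on `[0, C_{k,d}]`.
-/

noncomputable section

/-- `h(x) = -x log x`, with `h(0) = 0` (automatic since `Real.log 0 = 0`). -/
def h (x : ℝ) : ℝ := -(x * Real.log x)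

/-!
The functional is `d / 2` times the entropy of a pair of correlated bits of density `α`, minus
`d - 1` times the entropy of one bit. With `p = 2k/d` its derivative is
`-k log p + d (-(1 - p) log (1 - p)) + (k - 1) log α` plus
`(d / 2) (2 - p) log (1 - (2 - p) α) - (d - 1) log (1 - α)`. The last two terms have nonpositive sum
by Bernoulli's inequality, because `(2 - p) ^ 2 ≥ 2`. In the first three,
`-(1 - p) log (1 - p) ≤ p` costs at most `2k`, while `α ≤ C_{k,d}` says exactly that
`(k - 1) log α ≤ k log p - 4 (k - 1)`; this leaves `2k - 4 (k - 1) ≤ 0`.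
-/

section

open Real Set

theorem h_eq_negMulLog : h = negMulLog := by
  ext x
  simp only [h, negMulLog, neg_mul]

theorem lt_one_of_mul_lt_one_of_one_le {q a : ℝ} (hq : 1 ≤ q) (hqa : q * a < 1) : a < 1 := by
  contrapose! hqa
  exact one_le_mul_of_one_le_of_one_le hq hqa

theorem log_one_sub_mul_le {q a : ℝ} (hq : 1 ≤ q) (hqa : q * a < 1) :
    log (1 - q * a) ≤ q * log (1 - a) := by
  have ha : a < 1 := lt_one_of_mul_lt_one_of_one_le hq hqa
  have bernoulli : 1 + q * -a ≤ (1 + -a) ^ q :=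
    one_add_mul_self_le_rpow_one_add (by linarith) hq
  rw [← log_rpow (by linarith)]
  exact log_le_log (by linarith) (by simpa only [mul_neg, ← sub_eq_add_neg] using bernoulli)

theorem half_mul_log_one_sub_mul_le {d q a : ℝ} (hd : 0 ≤ d) (hq : √2 ≤ q) (ha : 0 ≤ a)
    (hqa : q * a < 1) : d / 2 * (q * log (1 - q * a)) ≤ (d - 1) * log (1 - a) := by
  have one_le_q : 1 ≤ q := one_lt_sqrt_two.le.trans hq
  have two_le_sq : 2 ≤ q ^ 2 := (sqrt_le_left (by linarith)).mp hq
  have a_lt_one : a < 1 := lt_one_of_mul_lt_one_of_one_le one_le_q hqa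
  have coeff_le : d - 1 ≤ d / 2 * q ^ 2 := by nlinarith
  have log_one_sub_nonpos : log (1 - a) ≤ 0 := log_nonpos (by linarith) (by linarith)
  calc d / 2 * (q * log (1 - q * a))
      ≤ d / 2 * (q * (q * log (1 - a))) := by gcongr; exact log_one_sub_mul_le one_le_q hqa
    _ = d / 2 * q ^ 2 * log (1 - a) := by ring
    _ ≤ (d - 1) * log (1 - a) := mul_le_mul_of_nonpos_right coeff_le log_one_sub_nonpos

theorem mul_log_le_of_le_exp_mul_rpow {a p k : ℝ} (hk : 1 < k) (hp : 0 < p) (ha : 0 < a) (c : ℝ)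
    (hac : a ≤ exp c * p ^ (1 + 1 / (k - 1))) :
    (k - 1) * log a ≤ (k - 1) * c + k * log p := by
  have hk' : 0 < k - 1 := sub_pos.mpr hk
  calc (k - 1) * log a
      ≤ (k - 1) * log (exp c * p ^ (1 + 1 / (k - 1))) := by gcongr
    _ = (k - 1) * (c + (1 + 1 / (k - 1)) * log p) := by
      rw [log_mul (exp_pos c).ne' (rpow_pos_of_pos hp _).ne', log_exp, log_rpow hp]
    _ = (k - 1) * c + k * log p := by field_simp; ring

theorem exp_neg_four_mul_rpow_le_half {p s : ℝ} (hp : 0 ≤ p) (hp' : p ≤ 1) (hs : 0 ≤ s) :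
    exp (-4) * p ^ s ≤ 1 / 2 := by
  have exp_le : exp (-4) ≤ 1 / 2 := by
    rw [exp_neg, one_div]
    exact inv_anti₀ two_pos (by linarith [add_one_le_exp (4 : ℝ)])
  exact (mul_le_of_le_one_right (exp_pos _).le (rpow_le_one hp hp' hs)).trans exp_le

/-- The functional `d / 2 · H(X, Y) - (d - 1) · H(X)`, where `X` and `Y` are bits of mean `α` with
`P(X = Y = 1) = p α`; the theorem is the case `p = 2k/d`. -/
def entropyTerm (d p α : ℝ) : ℝ :=
  d / 2 * (negMulLog (p * α) + 2 * negMulLog ((1 - p) * α) + negMulLog (1 - (2 - p) * α))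
    - (d - 1) * binEntropy α

theorem continuous_entropyTerm (d p : ℝ) : Continuous (entropyTerm d p) := by
  unfold entropyTerm
  fun_prop

theorem entropyTerm_eq (d p α : ℝ) :
    entropyTerm d p α = d / 2 * (α * (negMulLog p + 2 * negMulLog (1 - p))
      + (2 - p) * negMulLog α + negMulLog (1 - (2 - p) * α)) - (d - 1) * binEntropy α := by
  rw [entropyTerm, negMulLog_mul, negMulLog_mul]
  ring

theorem hasDerivAt_entropyTerm (d p : ℝ) {a : ℝ} (ha : a ≠ 0) (ha' : a ≠ 1)
    (hpa : (2 - p) * a ≠ 1) :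
    HasDerivAt (entropyTerm d p)
      (d / 2 * (negMulLog p + 2 * negMulLog (1 - p)) + (d * p / 2 - 1) * log a
        + d / 2 * ((2 - p) * log (1 - (2 - p) * a)) - (d - 1) * log (1 - a)) a := by
  have deriv_both_zero : HasDerivAt (fun α ↦ negMulLog (1 - (2 - p) * α))
      ((-log (1 - (2 - p) * a) - 1) * -((2 - p) * 1)) a :=
    HasDerivAt.comp (h₂ := negMulLog) a (hasDerivAt_negMulLog (sub_ne_zero.mpr hpa.symm))
      (((hasDerivAt_id' a).const_mul (2 - p)).const_sub 1)
  have deriv_joint := ((((hasDerivAt_id' a).mul_const (negMulLog p + 2 * negMulLog (1 - p))).add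
    ((hasDerivAt_negMulLog ha).const_mul (2 - p))).add deriv_both_zero).const_mul (d / 2)
  rw [funext (entropyTerm_eq d p)]
  exact (deriv_joint.sub ((hasDerivAt_binEntropy ha ha').const_mul (d - 1))).congr_deriv (by ring)

theorem deriv_entropyTerm_nonpos {d k p a : ℝ} (hk : 2 ≤ k) (hp : 0 < p) (hp' : p ≤ 2 - √2)
    (hdp : d * p = 2 * k) (ha : 0 < a) (hpa : (2 - p) * a < 1)
    (haC : a ≤ exp (-4) * p ^ (1 + 1 / (k - 1))) : deriv (entropyTerm d p) a ≤ 0 := by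
  have hd : 0 < d := pos_of_mul_pos_left (by linarith) hp.le
  have p_lt_one : p < 1 := by linarith [one_lt_sqrt_two]
  have a_lt_one : a < 1 := lt_one_of_mul_lt_one_of_one_le (by linarith) hpa
  have log_one_sub_terms : d / 2 * ((2 - p) * log (1 - (2 - p) * a)) ≤ (d - 1) * log (1 - a) :=
    half_mul_log_one_sub_mul_le hd.le (by linarith) ha.le hpa
  have log_term : (k - 1) * log a ≤ (k - 1) * -4 + k * log p :=
    mul_log_le_of_le_exp_mul_rpow (by linarith) hp ha (-4) haC
  have entropy_one_sub : d * negMulLog (1 - p) ≤ 2 * k := by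
    rw [← hdp]
    gcongr
    linarith [negMulLog_le_one_sub_self (sub_nonneg.mpr p_lt_one.le)]
  have entropy_p : d / 2 * negMulLog p = -(k * log p) := by
    rw [negMulLog]
    linear_combination (-log p / 2) * hdp
  rw [(hasDerivAt_entropyTerm d p ha.ne' a_lt_one.ne hpa.ne).deriv, hdp]
  linarith

theorem antitoneOn_entropyTerm {d k p : ℝ} (hk : 2 ≤ k) (hp : 0 < p) (hp' : p ≤ 2 - √2)
    (hdp : d * p = 2 * k) :
    AntitoneOn (entropyTerm d p) (Icc 0 (exp (-4) * p ^ (1 + 1 / (k - 1)))) := by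
  have p_lt_one : p < 1 := by linarith [one_lt_sqrt_two]
  have exponent_nonneg : 0 ≤ 1 + 1 / (k - 1) := by
    have : 0 < k - 1 := by linarith
    positivity
  have mul_lt_one {a : ℝ} (ha : a ∈ Ioo 0 (exp (-4) * p ^ (1 + 1 / (k - 1)))) :
      (2 - p) * a < 1 := by
    have a_lt_half : a < 1 / 2 :=
      ha.2.trans_le (exp_neg_four_mul_rpow_le_half hp.le p_lt_one.le exponent_nonneg)
    linarith [mul_pos hp ha.1]
  apply antitoneOn_of_deriv_nonpos (convex_Icc _ _) (continuous_entropyTerm d p).continuousOn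
  · rw [interior_Icc]
    intro a ha
    have a_lt_one : a < 1 := lt_one_of_mul_lt_one_of_one_le (by linarith) (mul_lt_one ha)
    exact (hasDerivAt_entropyTerm d p ha.1.ne' a_lt_one.ne
      (mul_lt_one ha).ne).differentiableAt.differentiableWithinAt
  · rw [interior_Icc]
    intro a ha
    exact deriv_entropyTerm_nonpos hk hp hp' hdp ha.1 (mul_lt_one ha) ha.2.le

theorem pos_of_le_one_sub_inv_sqrt_two_mul {d k : ℝ} (hk : 0 < k)
    (hkd : k ≤ (1 - 1 / √2) * d) : 0 < d :=
  pos_of_mul_pos_right (hk.trans_le hkd)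
    (sub_nonneg.mpr ((div_le_one (by positivity)).mpr one_lt_sqrt_two.le))

theorem two_mul_div_le_two_sub_sqrt_two {d k : ℝ} (hd : 0 < d)
    (hkd : k ≤ (1 - 1 / √2) * d) : 2 * k / d ≤ 2 - √2 := by
  have two_div_sqrt : 2 * (1 / √2) = √2 := by rw [mul_one_div, div_sqrt]
  rw [div_le_iff₀ hd]
  linear_combination 2 * hkd - d * two_div_sqrt

end

/-- For reals `2 ≤ k ≤ (1 - 1/√2) d` and `C_{k,d} = e^{-4}(2k/d)^{1+1/(k-1)}`, the function
`α ↦ (d/2)[h((2k/d)α) + 2h(α - (2k/d)α) + h(1 - 2α + (2k/d)α)] - (d-1)[h(α) + h(1-α)]`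
is decreasing on the interval `[0, C_{k,d}]`. -/
theorem entropy_term_decreasing (d k : ℝ) (hk : 2 ≤ k)
    (hkd : k ≤ (1 - 1 / Real.sqrt 2) * d) :
    AntitoneOn
      (fun α : ℝ =>
        d / 2 * (h (2 * k / d * α) + 2 * h (α - 2 * k / d * α)
            + h (1 - 2 * α + 2 * k / d * α))
          - (d - 1) * (h α + h (1 - α)))
      (Set.Icc 0 (Real.exp (-4) * (2 * k / d) ^ (1 + 1 / (k - 1)))) := by
  have hd : 0 < d := pos_of_le_one_sub_inv_sqrt_two_mul (by linarith) hkd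
  have hp : 0 < 2 * k / d := by positivity
  have hdp : d * (2 * k / d) = 2 * k := mul_div_cancel₀ _ hd.ne'
  refine (antitoneOn_entropyTerm hk hp (two_mul_div_le_two_sub_sqrt_two hd hkd) hdp).congr ?_
  intro α _
  rw [entropyTerm, Real.binEntropy_eq_negMulLog_add_negMulLog_one_sub, ← h_eq_negMulLog]
  ring_nf

end
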